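/- Let F be a finite field with q elements, V = F⁷ with coordinates indexed 0,…,6, and Q the quadratic form Q(x) = x₀x₄ + x₁x₅ + x₂x₆ − x₃² on V. For every singular point P (a 1-dimensional subspace of V on which Q vanishes), the number of moving lines containing P is exactly (q + 1)q². -/

import Mathlib

variable {F : Type} [Field F]

/-- The quadratic form `Q(x) = x₀x₄ + x₁x₅ + x₂x₆ − x₃²` on `F⁷`. -/
def quadForm (x : Fin 7 → F) : F :=
  x 0 * x 4 + x 1 * x 5 + x 2 * x 6 - x 3 ^ 2

/-- A singular point: a 1-dimensional subspace of `F⁷` on which `Q` vanishes. -/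
def SingularPoint (W : Submodule F (Fin 7 → F)) : Prop :=
  Module.finrank F W = 1 ∧ ∀ x ∈ W, quadForm x = 0

/-- A totally singular line: a 2-dimensional subspace of `F⁷` on which `Q` vanishes. -/
def TotallySingularLine (W : Submodule F (Fin 7 → F)) : Prop :=
  Module.finrank F W = 2 ∧ ∀ x ∈ W, quadForm x = 0

/-- Grassmann coordinate `m_{ij} = u_i v_j − u_j v_i` of the pair `(u, v)`. -/
def grass (u v : Fin 7 → F) (i j : Fin 7) : F := u i * v j - u j * v i

/-- The hexagon equations for a pair of vectors `(u, v)`. -/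
def HexEq (u v : Fin 7 → F) : Prop :=
  grass u v 1 2 = grass u v 3 4 ∧ grass u v 5 4 = grass u v 3 2 ∧
  grass u v 2 0 = grass u v 3 5 ∧ grass u v 6 5 = grass u v 3 0 ∧
  grass u v 0 1 = grass u v 3 6 ∧ grass u v 4 6 = grass u v 3 1

/-- A subspace satisfies the hexagon equations if every pair of its vectors does
(for a 2-dimensional subspace this is independent of the choice of basis). -/
def SatisfiesHexEq (W : Submodule F (Fin 7 → F)) : Prop :=
  ∀ u ∈ W, ∀ v ∈ W, HexEq u v

/-- An absolute line: a totally singular line satisfying the hexagon equations. -/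
def AbsoluteLine (W : Submodule F (Fin 7 → F)) : Prop :=
  TotallySingularLine W ∧ SatisfiesHexEq W

/-- A moving line: a totally singular line not satisfying the hexagon equations. -/
def MovingLine (W : Submodule F (Fin 7 → F)) : Prop :=
  TotallySingularLine W ∧ ¬ SatisfiesHexEq W

/-!
Let `P = ⟨u⟩` be a singular point. The totally singular lines through `P` are the points of the
quadric induced on the 5-dimensional space `P^⊥ / P`. A rotation of the coordinate hexagon and a
rescaling bring `u` to the form `u 0 = 1`. In that case `P^⊥ / P` has coordinates in which the
quadric is `s₀s₃ + s₁s₄ = s₂²` and its points on the line `s₀ = s₁ = 0` are exactly the absolute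
lines through `P`. At a point off this line, the ratio `s₀ : s₁` is an arbitrary point of the
projective line; once `s₀` and `s₁` are normalised, `s₂` and one of `s₃`, `s₄` are free and
determine the other. Hence there are `(q + 1) q²` moving lines through `P`.
-/

open Cardinal Module QuadraticMap Submodule

theorem finrank_span_pair_of_linearIndependent {R M : Type*} [Ring R] [StrongRankCondition R]
    [AddCommGroup M] [Module R M] {u v : M} (huv : LinearIndependent R ![u, v]) :
    finrank R (span R {u, v}) = 2 := by
  have := nontrivial_of_invariantBasisNumber R
  rw [← Matrix.range_cons_cons_empty u v ![], finrank_span_eq_card huv, Fintype.card_fin]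

theorem span_pair_eq_of_linearIndependent {K V : Type*} [DivisionRing K] [AddCommGroup V]
    [Module K V] {W : Submodule K V} (hW : finrank K W = 2) {u v : V} (hu : u ∈ W)
    (hv : v ∈ W) (huv : LinearIndependent K ![u, v]) : span K {u, v} = W := by
  have : FiniteDimensional K W := .of_finrank_pos (by omega)
  refine eq_of_le_of_finrank_eq (span_le.2 (Set.pair_subset hu hv)) ?_
  rw [hW, finrank_span_pair_of_linearIndependent huv]

theorem quadForm_smul (c : F) (x : Fin 7 → F) : quadForm (c • x) = c ^ 2 * quadForm x := by
  simp only [quadForm, Pi.smul_apply, smul_eq_mul]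
  ring

theorem quadForm_smul_add_smul (u v : Fin 7 → F) (a b : F) :
    quadForm (a • u + b • v) =
      a ^ 2 * quadForm u + b ^ 2 * quadForm v + a * b * polar quadForm u v := by
  simp only [quadForm, polar, Pi.add_apply, Pi.smul_apply, smul_eq_mul]
  ring

theorem totallySingularLine_span_pair_iff {u v : Fin 7 → F} (huv : LinearIndependent F ![u, v]) :
    TotallySingularLine (span F {u, v}) ↔
      quadForm u = 0 ∧ quadForm v = 0 ∧ polar quadForm u v = 0 := by
  have hu : u ∈ span F {u, v} := mem_span_of_mem (by simp)
  have hv : v ∈ span F {u, v} := mem_span_of_mem (by simp)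
  constructor
  · rintro ⟨-, hQ⟩
    exact ⟨hQ u hu, hQ v hv, by simp [polar, hQ _ (add_mem hu hv), hQ u hu, hQ v hv]⟩
  · rintro ⟨hQu, hQv, hpol⟩
    refine ⟨finrank_span_pair_of_linearIndependent huv, fun x hx ↦ ?_⟩
    obtain ⟨a, b, rfl⟩ := mem_span_pair.1 hx
    rw [quadForm_smul_add_smul, hQu, hQv, hpol]
    ring

theorem grass_smul_add_smul (u v : Fin 7 → F) (a b c d : F) (i j : Fin 7) :
    grass (a • u + b • v) (c • u + d • v) i j = (a * d - b * c) * grass u v i j := by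
  simp only [grass, Pi.add_apply, Pi.smul_apply, smul_eq_mul]
  ring

theorem satisfiesHexEq_span_pair_iff {u v : Fin 7 → F} :
    SatisfiesHexEq (span F {u, v}) ↔ HexEq u v := by
  refine ⟨fun h ↦ h u (mem_span_of_mem (by simp)) v (mem_span_of_mem (by simp)), ?_⟩
  rintro ⟨h₁, h₂, h₃, h₄, h₅, h₆⟩ x hx y hy
  obtain ⟨a, b, rfl⟩ := mem_span_pair.1 hx
  obtain ⟨c, d, rfl⟩ := mem_span_pair.1 hy
  simp only [HexEq, grass_smul_add_smul, h₁, h₂, h₃, h₄, h₅, h₆, and_self]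

/-- The linear automorphisms of `F⁷` preserving the quadratic form and the hexagon equations. -/
def hexSymmetries (F : Type) [Field F] : Subgroup ((Fin 7 → F) ≃ₗ[F] (Fin 7 → F)) where
  carrier := {σ | (∀ x, quadForm (σ x) = quadForm x) ∧ ∀ x y, HexEq (σ x) (σ y) ↔ HexEq x y}
  one_mem' := ⟨fun _ ↦ rfl, fun _ _ ↦ Iff.rfl⟩
  mul_mem' hσ hτ :=
    ⟨fun x ↦ (hσ.1 _).trans (hτ.1 x), fun x y ↦ (hσ.2 _ _).trans (hτ.2 x y)⟩
  inv_mem' {σ} hσ := by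
    refine ⟨fun x ↦ ?_, fun x y ↦ ?_⟩
    · rw [← hσ.1, LinearEquiv.coe_inv, σ.apply_symm_apply]
    · rw [← hσ.2, LinearEquiv.coe_inv, σ.apply_symm_apply, σ.apply_symm_apply]

theorem movingLine_map_iff {σ : (Fin 7 → F) ≃ₗ[F] (Fin 7 → F)} (hσ : σ ∈ hexSymmetries F)
    (W : Submodule F (Fin 7 → F)) :
    MovingLine (W.map (σ : (Fin 7 → F) →ₗ[F] (Fin 7 → F))) ↔ MovingLine W := by
  simp only [MovingLine, TotallySingularLine, SatisfiesHexEq, LinearEquiv.finrank_map_eq, mem_map,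
    LinearEquiv.coe_coe, forall_exists_index, and_imp, forall_apply_eq_imp_iff₂, hσ.1, hσ.2]

theorem mk_movingLines_map {σ : (Fin 7 → F) ≃ₗ[F] (Fin 7 → F)} (hσ : σ ∈ hexSymmetries F)
    (P : Submodule F (Fin 7 → F)) :
    #{W // MovingLine W ∧ P.map (σ : (Fin 7 → F) →ₗ[F] (Fin 7 → F)) ≤ W} =
      #{W // MovingLine W ∧ P ≤ W} :=
  .symm <| mk_congr <| (orderIsoMapComap σ).toEquiv.subtypeEquiv fun W ↦
    and_congr (movingLine_map_iff hσ W).symm (map_le_map_iff_of_injective σ.injective P W).symm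

/-- The symmetry of order 6 that rotates the ordinary hexagon formed by the coordinate points
other than `e₃`. -/
def hexRotation (F : Type) [Field F] : (Fin 7 → F) ≃ₗ[F] (Fin 7 → F) where
  toFun x := ![x 5, x 6, x 4, -x 3, x 1, x 2, x 0]
  invFun x := ![x 6, x 4, x 5, -x 3, x 2, x 0, x 1]
  map_add' x y := by ext i; fin_cases i <;> simp [add_comm]
  map_smul' c x := by ext i; fin_cases i <;> simp
  left_inv x := by ext i; fin_cases i <;> simp
  right_inv x := by ext i; fin_cases i <;> simp

theorem hexRotation_apply (x : Fin 7 → F) :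
    hexRotation F x = ![x 5, x 6, x 4, -x 3, x 1, x 2, x 0] := rfl

theorem hexRotation_mem_hexSymmetries : hexRotation F ∈ hexSymmetries F := by
  refine ⟨fun x ↦ ?_, fun x y ↦ ?_⟩
  · simp only [quadForm, hexRotation_apply, Matrix.cons_val]
    ring
  · simp only [HexEq, grass, hexRotation_apply, Matrix.cons_val]
    grind

theorem exists_mem_hexSymmetries_apply_zero_ne_zero {u : Fin 7 → F} (hu : u ≠ 0)
    (hQ : quadForm u = 0) : ∃ σ ∈ hexSymmetries F, σ u 0 ≠ 0 := by
  by_contra! h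
  have hrot (k : ℕ) : (hexRotation F ^ k) u 0 = 0 :=
    h _ (pow_mem hexRotation_mem_hexSymmetries k)
  have h₀ : u 0 = 0 := hrot 0
  have h₅ : u 5 = 0 := hrot 1
  have h₂ : u 2 = 0 := hrot 2
  have h₄ : u 4 = 0 := hrot 3
  have h₁ : u 1 = 0 := hrot 4
  have h₆ : u 6 = 0 := hrot 5
  have h₃ : u 3 = 0 := by simpa [quadForm, h₀, h₁, h₂] using hQ
  exact hu (by ext i; fin_cases i <;> assumption)

/-- For a singular vector `u` with `u 0 = 1`, coordinates on the residue `⟨u⟩^⊥ / ⟨u⟩` of the point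
`⟨u⟩`, each class being represented by its vector with vanishing entry `0`. The coordinates
`s 3` and `s 4` are the entries `5` and `6`; the remaining three are chosen so that they vanish
exactly when the hexagon equations hold: if `m` denotes the Grassmann coordinates of
`(u, residueLift u s)`, then `s 2 = m₆₅ - m₃₀`, `s 0 = m₀₁ - m₃₆ + u 6 * s 2` and
`s 1 = m₃₅ - m₂₀ - u 5 * s 2`. -/
def residueLift (u : Fin 7 → F) : (Fin 5 → F) →ₗ[F] (Fin 7 → F) where
  toFun s :=
    let w₃ := s 2 + u 5 * s 4 - u 6 * s 3
    let w₁ := s 0 - u 6 * s 2 + u 3 * s 4 - u 6 * w₃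
    let w₂ := s 1 + u 5 * s 2 - u 3 * s 3 + u 5 * w₃
    ![0, w₁, w₂, w₃, 2 * u 3 * w₃ - u 1 * s 3 - u 5 * w₁ - u 2 * s 4 - u 6 * w₂, s 3, s 4]
  map_add' s t := by ext i; fin_cases i <;> simp <;> ring
  map_smul' c s := by ext i; fin_cases i <;> simp <;> ring

/-- The quadratic form induced by `quadForm` on the residue of a singular point, in the coordinates
of `residueLift`. -/
def residueForm (s : Fin 5 → F) : F := s 0 * s 3 + s 1 * s 4 - s 2 ^ 2

section Residue

variable {u : Fin 7 → F}

theorem residueLift_apply_zero (s : Fin 5 → F) : residueLift u s 0 = 0 := rfl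

theorem quadForm_residueLift (s : Fin 5 → F) : quadForm (residueLift u s) = residueForm s := by
  simp only [quadForm, residueForm, residueLift, LinearMap.coe_mk, AddHom.coe_mk, Matrix.cons_val]
  ring

theorem polar_residueLift (hu₀ : u 0 = 1) (s : Fin 5 → F) :
    polar quadForm u (residueLift u s) = 0 := by
  simp only [polar, quadForm, residueLift, LinearMap.coe_mk, AddHom.coe_mk, Pi.add_apply,
    Matrix.cons_val, hu₀]
  ring

theorem residueLift_injective (u : Fin 7 → F) : Function.Injective (residueLift u) := by
  rw [injective_iff_map_eq_zero]
  intro s hs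
  have h (i : Fin 7) : residueLift u s i = 0 := congrFun hs i
  have h₃ : s 3 = 0 := h 5
  have h₄ : s 4 = 0 := h 6
  have h₂ : s 2 = 0 := by simpa [residueLift, h₃, h₄] using h 3
  have h₀ : s 0 = 0 := by simpa [residueLift, h₂, h₃, h₄] using h 1
  have h₁ : s 1 = 0 := by simpa [residueLift, h₂, h₃, h₄] using h 2
  ext i
  fin_cases i <;> assumption

theorem exists_residueLift_eq (hu₀ : u 0 = 1) {w : Fin 7 → F} (hw₀ : w 0 = 0)
    (hw : polar quadForm u w = 0) : ∃ s, residueLift u s = w := by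
  have hw₄ : w 4 = 2 * u 3 * w 3 - u 1 * w 5 - u 5 * w 1 - u 2 * w 6 - u 6 * w 2 := by
    simp only [polar, quadForm, Pi.add_apply, hu₀, hw₀] at hw
    linear_combination hw
  let d := w 3 - u 5 * w 6 + u 6 * w 5
  refine ⟨![w 1 + u 6 * d - u 3 * w 6 + u 6 * w 3, w 2 - u 5 * d + u 3 * w 5 - u 5 * w 3, d,
    w 5, w 6], ?_⟩
  ext i
  fin_cases i <;> simp [residueLift, d, hw₀, hw₄] <;> ring

theorem hexEq_residueLift_iff (hu₀ : u 0 = 1) (hu : quadForm u = 0) {s : Fin 5 → F}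
    (hs : residueForm s = 0) : HexEq u (residueLift u s) ↔ s 0 = 0 ∧ s 1 = 0 := by
  simp only [quadForm, hu₀] at hu
  simp only [residueForm] at hs
  simp only [HexEq, grass, residueLift, LinearMap.coe_mk, AddHom.coe_mk, Matrix.cons_val, hu₀]
  constructor
  · rintro ⟨-, -, h₂₀, h₆₅, h₀₁, -⟩
    have hs₂ : s 2 = 0 := by linear_combination h₆₅
    exact ⟨by linear_combination h₀₁ + u 6 * hs₂, by linear_combination -h₂₀ - u 5 * hs₂⟩
  · rintro ⟨hs₀, hs₁⟩
    have hs₂ : s 2 = 0 := by simpa [hs₀, hs₁] using hs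
    have hu₄ : u 4 = u 3 ^ 2 - u 1 * u 5 - u 2 * u 6 := by linear_combination hu
    simp only [hs₀, hs₁, hs₂, hu₄]
    refine ⟨?_, ?_, ?_, ?_, ?_, ?_⟩ <;> ring

theorem linearIndependent_residueLift (hu₀ : u 0 = 1) {s : Fin 5 → F} (hs : s ≠ 0) :
    LinearIndependent F ![u, residueLift u s] := by
  refine LinearIndependent.pair_iff.2 fun a b h ↦ ?_
  have ha : a = 0 := by simpa [hu₀, residueLift_apply_zero] using congrFun h 0
  have hb : residueLift u (b • s) = 0 := by simpa [ha] using h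
  rw [map_eq_zero_iff _ (residueLift_injective u)] at hb
  exact ⟨ha, (smul_eq_zero.1 hb).resolve_right hs⟩

theorem movingLine_span_residueLift_iff (hu₀ : u 0 = 1) (hu : quadForm u = 0) {s : Fin 5 → F}
    (hs : s ≠ 0) :
    MovingLine (span F {u, residueLift u s}) ↔ residueForm s = 0 ∧ (s 0 ≠ 0 ∨ s 1 ≠ 0) := by
  rw [MovingLine, totallySingularLine_span_pair_iff (linearIndependent_residueLift hu₀ hs),
    satisfiesHexEq_span_pair_iff, quadForm_residueLift]
  simp only [hu, polar_residueLift hu₀, true_and, and_true]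
  refine and_congr_right fun hQs ↦ ?_
  rw [hexEq_residueLift_iff hu₀ hu hQs, not_and_or]

theorem exists_eq_span_residueLift (hu₀ : u 0 = 1) {W : Submodule F (Fin 7 → F)}
    (hW : TotallySingularLine W) (huW : u ∈ W) :
    ∃ s, s ≠ 0 ∧ W = span F {u, residueLift u s} := by
  obtain ⟨hdim, hQ⟩ := hW
  obtain ⟨v, hvW, hv⟩ : ∃ v ∈ W, v ∉ span F {u} := by
    by_contra! h
    have := (finrank_mono h).trans (finrank_span_le_card ({u} : Set (Fin 7 → F)))
    simp [hdim] at this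
  have hwW : v - v 0 • u ∈ W := sub_mem hvW (smul_mem W _ huW)
  obtain ⟨s, hs⟩ : ∃ s, residueLift u s = v - v 0 • u :=
    exists_residueLift_eq hu₀ (by simp [hu₀])
      (by simp only [polar, hQ _ (add_mem huW hwW), hQ _ hwW, hQ _ huW, sub_zero])
  have hs₀ : s ≠ 0 := by
    rintro rfl
    rw [map_zero, eq_comm, sub_eq_zero] at hs
    exact hv (mem_span_singleton.2 ⟨v 0, hs.symm⟩)
  exact ⟨s, hs₀, (span_pair_eq_of_linearIndependent hdim huW (hs ▸ hwW)
    (linearIndependent_residueLift hu₀ hs₀)).symm⟩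

theorem residueLift_mem_span_pair_iff (hu₀ : u 0 = 1) {s t : Fin 5 → F} :
    residueLift u t ∈ span F {u, residueLift u s} ↔ t ∈ span F {s} := by
  rw [mem_span_pair, mem_span_singleton]
  constructor
  · rintro ⟨a, b, h⟩
    have ha : a = 0 := by simpa [hu₀, residueLift_apply_zero] using congrFun h 0
    exact ⟨b, residueLift_injective u (by simpa [ha] using h)⟩
  · rintro ⟨b, rfl⟩
    exact ⟨0, b, by simp⟩

end Residue

/-- Normal form for the projective points of the quadric `residueForm s = 0` off the line
`s 0 = s 1 = 0`: the index in `Option F` is the ratio `s 1 / s 0`, with `none` as the point at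
infinity of the projective line. -/
def residuePoint : Option F × F × F → Fin 5 → F
  | (some c, d, f) => ![1, c, d, d ^ 2 - c * f, f]
  | (none, d, e) => ![0, 1, d, e, d ^ 2]

theorem residuePoint_apply_zero_or_apply_one_ne_zero (p : Option F × F × F) :
    residuePoint p 0 ≠ 0 ∨ residuePoint p 1 ≠ 0 := by
  rcases p with ⟨_ | b, d, e⟩ <;> simp [residuePoint]

theorem residuePoint_ne_zero (p : Option F × F × F) : residuePoint p ≠ 0 := fun h ↦
  (residuePoint_apply_zero_or_apply_one_ne_zero p).elim (· (congrFun h 0)) (· (congrFun h 1))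

theorem residueForm_residuePoint (p : Option F × F × F) : residueForm (residuePoint p) = 0 := by
  rcases p with ⟨_ | b, d, e⟩ <;> simp [residueForm, residuePoint]

theorem eq_of_residuePoint_mem_span {p p' : Option F × F × F}
    (h : residuePoint p ∈ span F {residuePoint p'}) : p = p' := by
  obtain ⟨c, hc⟩ := mem_span_singleton.1 h
  have hi (i : Fin 5) : c * residuePoint p' i = residuePoint p i := congrFun hc i
  have h₀ := hi 0
  have h₁ := hi 1
  have h₂ := hi 2
  have h₃ := hi 3
  have h₄ := hi 4
  rcases p with ⟨_ | b, d, e⟩ <;> rcases p' with ⟨_ | b', d', e'⟩ <;>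
    simp only [residuePoint, Matrix.cons_val] at h₀ h₁ h₂ h₃ h₄ <;> grind

theorem exists_residuePoint_mem_span {s : Fin 5 → F} (hs : residueForm s = 0)
    (hne : s 0 ≠ 0 ∨ s 1 ≠ 0) : ∃ p, residuePoint p ∈ span F {s} := by
  simp only [residueForm] at hs
  simp only [mem_span_singleton]
  by_cases h₀ : s 0 = 0
  · refine ⟨(none, s 2 / s 1, s 3 / s 1), (s 1)⁻¹, ?_⟩
    ext i
    fin_cases i <;> simp [residuePoint] <;> grind
  · refine ⟨(some (s 1 / s 0), s 2 / s 0, s 4 / s 0), (s 0)⁻¹, ?_⟩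
    ext i
    fin_cases i <;> simp [residuePoint] <;> grind

theorem mk_movingLines_span_of_apply_zero_eq_one {u : Fin 7 → F} (hu₀ : u 0 = 1)
    (hu : quadForm u = 0) : #{W // MovingLine W ∧ span F {u} ≤ W} = (#F + 1) * #F ^ 2 := by
  have hmoving (p) : MovingLine (span F {u, residueLift u (residuePoint p)}) :=
    (movingLine_span_residueLift_iff hu₀ hu (residuePoint_ne_zero p)).2
      ⟨residueForm_residuePoint p, residuePoint_apply_zero_or_apply_one_ne_zero p⟩
  let lineOf (p : Option F × F × F) : {W // MovingLine W ∧ span F {u} ≤ W} :=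
    ⟨span F {u, residueLift u (residuePoint p)}, hmoving p, span_mono (by simp)⟩
  have hinj : Function.Injective lineOf := fun p p' h ↦ by
    have hspan : span F {u, residueLift u (residuePoint p)} =
        span F {u, residueLift u (residuePoint p')} := congrArg Subtype.val h
    exact eq_of_residuePoint_mem_span <| (residueLift_mem_span_pair_iff hu₀).1 <|
      hspan ▸ mem_span_of_mem (by simp)
  have hsurj : Function.Surjective lineOf := by
    rintro ⟨W, hW, huW⟩
    rw [span_singleton_le_iff_mem] at huW
    obtain ⟨s, hs, rfl⟩ := exists_eq_span_residueLift hu₀ hW.1 huW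
    obtain ⟨hQs, hne⟩ := (movingLine_span_residueLift_iff hu₀ hu hs).1 hW
    obtain ⟨p, hp⟩ := exists_residuePoint_mem_span hQs hne
    exact ⟨p, Subtype.ext <| span_pair_eq_of_linearIndependent hW.1.1 huW
      ((residueLift_mem_span_pair_iff hu₀).2 hp)
      (linearIndependent_residueLift hu₀ (residuePoint_ne_zero p))⟩
  rw [← mk_congr (.ofBijective lineOf ⟨hinj, hsurj⟩)]
  simp [mk_prod, pow_two]

theorem SingularPoint.exists_eq_span_singleton {P : Submodule F (Fin 7 → F)}
    (hP : SingularPoint P) : ∃ u, u ≠ 0 ∧ quadForm u = 0 ∧ P = span F {u} := by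
  obtain ⟨u, huP, hu⟩ := P.exists_mem_ne_zero_of_ne_bot (by
    rintro rfl
    simpa using hP.1)
  exact ⟨u, hu, hP.2 u huP, eq_span_singleton_of_mem_of_finrank_eq_one hP.1 huP hu⟩

theorem stmt_8_general (P : Submodule F (Fin 7 → F)) (hP : SingularPoint P) :
    #{W : Submodule F (Fin 7 → F) // MovingLine W ∧ P ≤ W} = (#F + 1) * #F ^ 2 := by
  obtain ⟨u, hu, hQ, rfl⟩ := hP.exists_eq_span_singleton
  obtain ⟨σ, hσ, hσu⟩ := exists_mem_hexSymmetries_apply_zero_ne_zero hu hQ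
  have hmap : (span F {u}).map (σ : (Fin 7 → F) →ₗ[F] (Fin 7 → F)) =
      span F {(σ u 0)⁻¹ • σ u} := by
    rw [map_span, Set.image_singleton, LinearEquiv.coe_coe,
      span_singleton_smul_eq (inv_ne_zero hσu).isUnit]
  rw [← mk_movingLines_map hσ, hmap]
  refine mk_movingLines_span_of_apply_zero_eq_one ?_ ?_
  · simp [hσu]
  · rw [quadForm_smul, hσ.1, hQ, mul_zero]

/-- Over a finite field with `q` elements, every singular point of the
quadratic form `Q(x) = x₀x₄ + x₁x₅ + x₂x₆ − x₃²` on `F⁷` is contained in exactly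
`(q+1)q²` moving lines. -/
theorem stmt_8 (q : ℕ) (F : Type) [Field F] [Fintype F] (hq : Fintype.card F = q)
    (P : Submodule F (Fin 7 → F)) (hP : SingularPoint P) :
    {W : Submodule F (Fin 7 → F) | MovingLine W ∧ P ≤ W}.ncard = (q + 1) * q ^ 2 := by
  rw [← Nat.card_coe_set_eq, Nat.card, Set.coe_ofPred, stmt_8_general P hP]
  simp [hq]
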